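/- Let n ≥ 1 and ℓ ≤ n, let H_{B₂} and H_R be finite-dimensional, and let ψ ∈ H_A ⊗ (H_{B₁} ⊗ H_{B₂}) ⊗ H_R with H_{B₁} = ℂ^V be a unit vector of the form ψ = ∑_{x∈V} √q_x |x̃⟩_A ⊗ |x̃⟩_{B₁} ⊗ |ϑ_x⟩_{B₂R}, where q is a probability distribution on V and the |ϑ_x⟩ are unit vectors (this expresses the condition H(X^A|B) = 0 for B = B₁B₂). Let g : V → (ZMod 2)^ℓ be a surjective linear map and 0 ≤ ε ≤ 1, and suppose the hashed X-key is ε-secure against R: D(σ_g^{KR}, 2^{−ℓ} 1_K ⊗ ψ^R) ≤ ε. Then for every surjective linear map f⊥ : V → (ZMod 2)^{n−ℓ} with ker f⊥ = range gᵀ, there exists a family of POVMs (Λ^c_z)_{z∈V} on H_B = H_{B₁} ⊗ H_{B₂}, one for each c ∈ (ZMod 2)^{n−ℓ}, such that ∑_{z∈V} ⟨ψ| (|z⟩⟨z| ⊗ Λ^{f⊥(z)}_z ⊗ 1_R) |ψ⟩ ≥ 1 − √(2ε); that is, f⊥ is a compressor to n−ℓ bits from which, together with B, the Z-measurement outcome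 is √(2ε)-recoverable. -/

import Mathlib

open Matrix BigOperators Finset
open scoped Classical ComplexOrder

noncomputable section

/-- The positive semidefinite square root of a matrix (zero if the matrix is not PSD). -/
def psdSqrt {ι : Type*} [Fintype ι] [DecidableEq ι] (M : Matrix ι ι ℂ) : Matrix ι ι ℂ :=
  if h : M.PosSemidef then
    (h.1.eigenvectorUnitary : Matrix ι ι ℂ) * diagonal ((↑) ∘ Real.sqrt ∘ h.1.eigenvalues) *
      (star h.1.eigenvectorUnitary : Matrix ι ι ℂ)
  else 0

/-- Trace norm ‖M‖₁ = Tr √(M†M). -/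
def traceNorm {ι : Type*} [Fintype ι] [DecidableEq ι] (M : Matrix ι ι ℂ) : ℝ :=
  ((psdSqrt (Mᴴ * M)).trace).re

/-- Trace distance D(ρ,σ) = ‖ρ−σ‖₁/2. -/
def traceDist {ι : Type*} [Fintype ι] [DecidableEq ι] (ρ σ : Matrix ι ι ℂ) : ℝ :=
  traceNorm (ρ - σ) / 2

/-- The adjoint fᵀ of a linear map f : (ZMod 2)^n → (ZMod 2)^m with respect to the
standard bilinear forms ⟨u,v⟩ = ∑ i, u i * v i, i.e. the map with ⟨fᵀc, v⟩ = ⟨c, f v⟩. -/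
def adjLin {n m : ℕ}
    (f : ((Fin n → ZMod 2)) →ₗ[ZMod 2] (Fin m → ZMod 2)) :
    ((Fin m → ZMod 2)) →ₗ[ZMod 2] (Fin n → ZMod 2) :=
  Matrix.toLin' (LinearMap.toMatrix' f)ᵀ

/-- Conjugate (X) basis vector of n qubits: |x̃⟩_z = (−1)^{⟨x,z⟩} / 2^{n/2}. -/
def xVecV (n : ℕ) (x z : Fin n → ZMod 2) : ℂ :=
  (-1 : ℂ) ^ ((∑ i, x i * z i : ZMod 2)).val / (Real.sqrt (2 ^ n) : ℂ)

/-- Component of (⟨x̃|⊗1_{BR})|ψ⟩. -/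
def condVecXV {n : ℕ} {β r : Type*} [Fintype β] [Fintype r]
    (ψ : (Fin n → ZMod 2) × β × r → ℂ) (x : Fin n → ZMod 2) (p : β × r) : ℂ :=
  ∑ z, (starRingEnd ℂ) (xVecV n x z) * ψ (z, p.1, p.2)

/-- Unnormalized conditional state ϑ_x^R = Tr_B[(⟨x̃|⊗1)|ψ⟩⟨ψ|(|x̃⟩⊗1)]. -/
def thetaRV {n : ℕ} {β r : Type*} [Fintype β] [Fintype r]
    (ψ : (Fin n → ZMod 2) × β × r → ℂ) (x : Fin n → ZMod 2) : Matrix r r ℂ :=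
  Matrix.of fun s s' => ∑ b, condVecXV ψ x (b, s) * (starRingEnd ℂ) (condVecXV ψ x (b, s'))

/-- Reduced state ψ^R = Tr_{AB}|ψ⟩⟨ψ|. -/
def reducedR {α β r : Type*} [Fintype α] [Fintype β] [Fintype r]
    (ψ : α × β × r → ℂ) : Matrix r r ℂ :=
  Matrix.of fun s s' => ∑ z, ∑ b, ψ (z, b, s) * (starRingEnd ℂ) (ψ (z, b, s'))

/-- The hashed X-key state σ_g^{KR} = ∑_k |k⟩⟨k| ⊗ ∑_{x : g x = k} ϑ_x^R. -/
def keyState {n ℓ : ℕ} {β r : Type*} [Fintype β] [Fintype r]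
    (ψ : (Fin n → ZMod 2) × β × r → ℂ)
    (g : ((Fin n → ZMod 2)) →ₗ[ZMod 2] (Fin ℓ → ZMod 2)) :
    Matrix ((Fin ℓ → ZMod 2) × r) ((Fin ℓ → ZMod 2) × r) ℂ :=
  Matrix.of fun p q =>
    if p.1 = q.1 then ∑ x ∈ Finset.univ.filter (fun x => g x = p.1), thetaRV ψ x p.2 q.2
    else 0

/-- The ideal key state 2^{−ℓ} 1_K ⊗ ψ^R on ℓ key bits. -/
def idealKeyV (ℓ : ℕ) {n : ℕ} {β r : Type*} [Fintype β] [Fintype r]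
    (ψ : (Fin n → ZMod 2) × β × r → ℂ) :
    Matrix ((Fin ℓ → ZMod 2) × r) ((Fin ℓ → ZMod 2) × r) ℂ :=
  Matrix.of fun p q => (if p.1 = q.1 then ((2 : ℂ) ^ ℓ)⁻¹ else 0) * reducedR ψ p.2 q.2

end

theorem neg_one_pow_val_add (a b : ZMod 2) :
    (-1 : ℂ) ^ (a + b).val = (-1) ^ a.val * (-1) ^ b.val := by
  rw [ZMod.val_add, ← pow_add, neg_one_pow_eq_pow_mod_two (n := a.val + b.val)]

/-- The sign `(-1)^⟨x,z⟩`. -/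
noncomputable def bitSign {m : ℕ} (x z : Fin m → ZMod 2) : ℂ := (-1 : ℂ) ^ (x ⬝ᵥ z).val

theorem bitSign_add_right {m : ℕ} (x y z : Fin m → ZMod 2) :
    bitSign x (y + z) = bitSign x y * bitSign x z := by
  simp [bitSign, dotProduct_add, neg_one_pow_val_add]

theorem bitSign_mul_self {m : ℕ} (x z : Fin m → ZMod 2) : bitSign x z * bitSign x z = 1 := by
  rw [bitSign, ← mul_pow]; simp

theorem star_bitSign {m : ℕ} (x z : Fin m → ZMod 2) : star (bitSign x z) = bitSign x z := by
  simp [bitSign]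

theorem sum_bitSign_mul_bitSign {m : ℕ} (x y : Fin m → ZMod 2) :
    ∑ z, bitSign x z * bitSign y z = if x = y then (2 : ℂ) ^ m else 0 := by
  split_ifs with h
  · subst h
    simp [bitSign_mul_self]
  · obtain ⟨i, hi⟩ := Function.ne_iff.mp h
    have hflip : bitSign x (Pi.single i 1) * bitSign y (Pi.single i 1) = -1 := by
      simp only [bitSign, dotProduct_single, mul_one]
      generalize x i = a at *
      generalize y i = b at *
      have : (a.val = 0 ∧ b.val = 1) ∨ (a.val = 1 ∧ b.val = 0) := by
        revert a b; decide
      rcases this with h | h <;> simp [h.1, h.2]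
    have hs := Equiv.sum_comp (Equiv.addRight (Pi.single i (1 : ZMod 2)))
      (fun z => bitSign x z * bitSign y z)
    simp only [Equiv.coe_addRight, bitSign_add_right, mul_mul_mul_comm, hflip,
      ← Finset.sum_mul] at hs
    linear_combination (-1 / 2 : ℂ) * hs

theorem adjLin_dotProduct {n m : ℕ}
    (f : (Fin n → ZMod 2) →ₗ[ZMod 2] (Fin m → ZMod 2)) (x : Fin n → ZMod 2)
    (u : Fin m → ZMod 2) : x ⬝ᵥ adjLin f u = f x ⬝ᵥ u := by
  have hf : f x = LinearMap.toMatrix' f *ᵥ x := by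
    rw [← Matrix.toLin'_apply, Matrix.toLin'_toMatrix']
  rw [hf, adjLin, Matrix.toLin'_apply, dotProduct_mulVec, vecMul_transpose]

theorem bitSign_adjLin {n m : ℕ}
    (f : (Fin n → ZMod 2) →ₗ[ZMod 2] (Fin m → ZMod 2)) (x : Fin n → ZMod 2)
    (u : Fin m → ZMod 2) : bitSign x (adjLin f u) = bitSign (f x) u := by
  rw [bitSign, adjLin_dotProduct, bitSign]

theorem xVecV_eq {n : ℕ} (x z : Fin n → ZMod 2) :
    xVecV n x z = ((Real.sqrt (2 ^ n) : ℝ) : ℂ)⁻¹ * bitSign x z := by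
  rw [xVecV, bitSign, dotProduct, div_eq_inv_mul]

theorem sqrt_two_pow_inv_mul_self (n : ℕ) :
    ((Real.sqrt (2 ^ n) : ℝ) : ℂ)⁻¹ * ((Real.sqrt (2 ^ n) : ℝ) : ℂ)⁻¹ = ((2 : ℂ) ^ n)⁻¹ := by
  rw [← mul_inv, ← Complex.ofReal_mul, Real.mul_self_sqrt (by positivity)]
  simp

theorem star_xVecV {n : ℕ} (x z : Fin n → ZMod 2) : star (xVecV n x z) = xVecV n x z := by
  rw [xVecV_eq, star_mul', star_bitSign]
  simp

theorem sum_xVecV_mul_xVecV {n : ℕ} (x y : Fin n → ZMod 2) :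
    ∑ z, xVecV n x z * xVecV n y z = if x = y then 1 else 0 := by
  simp_rw [xVecV_eq, mul_mul_mul_comm _ (bitSign x _), sqrt_two_pow_inv_mul_self]
  rw [← Finset.mul_sum, sum_bitSign_mul_bitSign]
  split_ifs <;> simp

theorem Matrix.IsHermitian.eq_eigenvectorUnitary_mul {ι : Type*} [Fintype ι] [DecidableEq ι]
    {M : Matrix ι ι ℂ} (hM : M.IsHermitian) :
    M = (hM.eigenvectorUnitary : Matrix ι ι ℂ) * diagonal (fun i => (hM.eigenvalues i : ℂ)) *
      (hM.eigenvectorUnitary : Matrix ι ι ℂ)ᴴ := by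
  have h := hM.spectral_theorem
  rw [Unitary.conjStarAlgAut_apply] at h
  exact h

theorem Matrix.IsHermitian.eigenvectorUnitary_conjTranspose_mul_self {ι : Type*} [Fintype ι]
    [DecidableEq ι] {M : Matrix ι ι ℂ} (hM : M.IsHermitian) :
    (hM.eigenvectorUnitary : Matrix ι ι ℂ)ᴴ * (hM.eigenvectorUnitary : Matrix ι ι ℂ) = 1 :=
  Unitary.coe_star_mul_self hM.eigenvectorUnitary

theorem Matrix.IsHermitian.eigenvectorUnitary_mul_conjTranspose_self {ι : Type*} [Fintype ι]
    [DecidableEq ι] {M : Matrix ι ι ℂ} (hM : M.IsHermitian) :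
    (hM.eigenvectorUnitary : Matrix ι ι ℂ) * (hM.eigenvectorUnitary : Matrix ι ι ℂ)ᴴ = 1 :=
  Unitary.coe_mul_star_self hM.eigenvectorUnitary

theorem conj_diagonal_mul_conj_diagonal {ι : Type*} [Fintype ι] [DecidableEq ι]
    {U : Matrix ι ι ℂ} (hU : Uᴴ * U = 1) (d e : ι → ℂ) :
    U * diagonal d * Uᴴ * (U * diagonal e * Uᴴ) = U * diagonal (fun i => d i * e i) * Uᴴ := by
  rw [← diagonal_mul_diagonal]
  calc _ = U * diagonal d * (Uᴴ * U) * diagonal e * Uᴴ := by simp only [Matrix.mul_assoc]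
    _ = _ := by rw [hU]; simp only [Matrix.mul_assoc, Matrix.one_mul]

theorem posSemidef_conj_diagonal {ι : Type*} [Fintype ι] [DecidableEq ι]
    (U : Matrix ι ι ℂ) {d : ι → ℝ} (hd : ∀ i, 0 ≤ d i) :
    (U * diagonal (fun i => (d i : ℂ)) * Uᴴ).PosSemidef := by
  refine PosSemidef.mul_mul_conjTranspose_same ?_ U
  rw [posSemidef_diagonal_iff]
  exact fun i => by exact_mod_cast hd i

/-- A positive semidefinite matrix has a square root `S` and a pseudo-inverse `J` of `S`. -/
theorem Matrix.PosSemidef.exists_sqrt_pinv {ι : Type*} [Fintype ι] [DecidableEq ι]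
    {G : Matrix ι ι ℂ} (hG : G.PosSemidef) :
    ∃ S J : Matrix ι ι ℂ, S.PosSemidef ∧ J.IsHermitian ∧ S * S = G ∧ J * G = S ∧
      J * (J * G * J) = J := by
  set U := (hG.1.eigenvectorUnitary : Matrix ι ι ℂ)
  have hU : Uᴴ * U = 1 := hG.1.eigenvectorUnitary_conjTranspose_mul_self
  have hGU : G = U * diagonal (fun i => (hG.1.eigenvalues i : ℂ)) * Uᴴ :=
    hG.1.eq_eigenvectorUnitary_mul
  have hev := hG.eigenvalues_nonneg
  generalize hG.1.eigenvalues = d at hGU hev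
  refine ⟨U * diagonal (fun i => ((√(d i) : ℝ) : ℂ)) * Uᴴ,
    U * diagonal (fun i => (((√(d i))⁻¹ : ℝ) : ℂ)) * Uᴴ,
    posSemidef_conj_diagonal U fun i => Real.sqrt_nonneg _,
    (posSemidef_conj_diagonal U fun i => inv_nonneg.mpr (Real.sqrt_nonneg _)).1, ?_, ?_, ?_⟩
  · rw [conj_diagonal_mul_conj_diagonal hU, hGU]
    congr 3
    ext i
    rw [← Complex.ofReal_mul, Real.mul_self_sqrt (hev i)]
  · rw [hGU, conj_diagonal_mul_conj_diagonal hU]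
    congr 3
    ext i
    rw [← Complex.ofReal_mul]
    congr 1
    nth_rewrite 2 [← Real.mul_self_sqrt (hev i)]
    rcases eq_or_ne (√(d i)) 0 with h | h
    · simp [h]
    · field_simp
  · rw [hGU]
    simp only [conj_diagonal_mul_conj_diagonal hU]
    congr 3
    ext i
    simp only [← Complex.ofReal_mul]
    congr 1
    nth_rewrite 3 [← Real.mul_self_sqrt (hev i)]
    rcases eq_or_ne (√(d i)) 0 with h | h
    · simp [h]
    · field_simp

theorem Matrix.PosSemidef.trace_mul_re_nonneg {ι : Type*} [Fintype ι] [DecidableEq ι]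
    {A B : Matrix ι ι ℂ} (hA : A.PosSemidef) (hB : B.PosSemidef) : 0 ≤ (A * B).trace.re := by
  obtain ⟨S, -, hS, -, hSS, -, -⟩ := hA.exists_sqrt_pinv
  rw [← hSS, Matrix.mul_assoc, Matrix.trace_mul_comm]
  have h := (hB.mul_mul_conjTranspose_same S).trace_nonneg
  rw [hS.1.eq] at h
  exact (Complex.le_def.mp h).1

theorem conjTranspose_mul_self_diag_re {ι κ : Type*} [Fintype ι]
    (A : Matrix ι κ ℂ) (i : κ) : ((Aᴴ * A) i i).re = ∑ j, ‖A j i‖ ^ 2 := by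
  rw [Matrix.mul_apply, Complex.re_sum]
  refine Finset.sum_congr rfl fun j _ => ?_
  rw [conjTranspose_apply, Complex.star_def, ← Complex.normSq_eq_conj_mul_self,
    Complex.ofReal_re, Complex.normSq_eq_norm_sq]

theorem traceNorm_eq_sum_sqrt_eigenvalues {ι : Type*} [Fintype ι] [DecidableEq ι]
    (M : Matrix ι ι ℂ) :
    traceNorm M = ∑ i, √((posSemidef_conjTranspose_mul_self M).1.eigenvalues i) := by
  have h := posSemidef_conjTranspose_mul_self M
  rw [traceNorm, psdSqrt, dif_pos h, Matrix.trace_mul_comm, ← Matrix.mul_assoc]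
  have hU := h.1.eigenvectorUnitary_conjTranspose_mul_self
  rw [← star_eq_conjTranspose] at hU
  erw [hU]
  simp [Matrix.trace]

/-- The trace norm dominates `Re Tr (W M)` for unitary `W`. -/
theorem trace_mul_re_le_traceNorm {ι : Type*} [Fintype ι] [DecidableEq ι]
    {W : Matrix ι ι ℂ} (hW : W * Wᴴ = 1) (M : Matrix ι ι ℂ) :
    (W * M).trace.re ≤ traceNorm M := by
  have h := (posSemidef_conjTranspose_mul_self M).1
  rw [traceNorm_eq_sum_sqrt_eigenvalues]
  set U := (h.eigenvectorUnitary : Matrix ι ι ℂ)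
  have hU : Uᴴ * U = 1 := h.eigenvectorUnitary_conjTranspose_mul_self
  have hU' : U * Uᴴ = 1 := h.eigenvectorUnitary_mul_conjTranspose_self
  have hMU : (M * U)ᴴ * (M * U) = diagonal (fun i => (h.eigenvalues i : ℂ)) := by
    calc _ = Uᴴ * (Mᴴ * M) * U := by
          simp only [conjTranspose_mul, Matrix.mul_assoc]
      _ = Uᴴ * (U * diagonal (fun i => (h.eigenvalues i : ℂ)) * Uᴴ) * U := by
          rw [← h.eq_eigenvectorUnitary_mul]
      _ = (Uᴴ * U) * diagonal (fun i => (h.eigenvalues i : ℂ)) * (Uᴴ * U) := by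
          simp only [Matrix.mul_assoc]
      _ = _ := by rw [hU, Matrix.one_mul, Matrix.mul_one]
  have hWU : (Wᴴ * U)ᴴ * (Wᴴ * U) = 1 := by
    calc _ = Uᴴ * (W * Wᴴ) * U := by
          simp only [conjTranspose_mul, conjTranspose_conjTranspose, Matrix.mul_assoc]
      _ = 1 := by rw [hW, Matrix.mul_one, hU]
  have htr : (W * M).trace = ((Wᴴ * U)ᴴ * (M * U)).trace := by
    calc (W * M).trace = (W * M * (U * Uᴴ)).trace := by rw [hU', Matrix.mul_one]
      _ = (Uᴴ * (W * M * U)).trace := by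
          rw [← Matrix.mul_assoc, Matrix.trace_mul_comm]
      _ = _ := by
          simp only [conjTranspose_mul, conjTranspose_conjTranspose, Matrix.mul_assoc]
  rw [htr, Matrix.trace, Complex.re_sum]
  refine Finset.sum_le_sum fun i _ => ?_
  have h1 := conjTranspose_mul_self_diag_re (M * U) i
  have h2 := conjTranspose_mul_self_diag_re (Wᴴ * U) i
  rw [hMU, diagonal_apply_eq, Complex.ofReal_re] at h1
  rw [hWU, one_apply_eq, Complex.one_re] at h2
  rw [Matrix.diag_apply, Matrix.mul_apply]
  calc _ ≤ ‖∑ j, (Wᴴ * U)ᴴ i j * (M * U) j i‖ := Complex.re_le_norm _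
    _ ≤ ∑ j, ‖(Wᴴ * U) j i‖ * ‖(M * U) j i‖ := by
        refine (norm_sum_le _ _).trans_eq (Finset.sum_congr rfl fun j _ => ?_)
        rw [norm_mul, conjTranspose_apply, norm_star]
    _ ≤ √(∑ j, ‖(Wᴴ * U) j i‖ ^ 2) * √(∑ j, ‖(M * U) j i‖ ^ 2) :=
        Real.sum_mul_le_sqrt_mul_sqrt _ _ _
    _ = _ := by rw [← h1, ← h2, Real.sqrt_one, one_mul]

/-- The Powers–Størmer inequality. -/
theorem trace_sub_mul_sub_le_traceNorm {ι : Type*} [Fintype ι] [DecidableEq ι]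
    {S T : Matrix ι ι ℂ} (hS : S.PosSemidef) (hT : T.PosSemidef) :
    ((S - T) * (S - T)).trace.re ≤ traceNorm (S * S - T * T) := by
  have h : (S - T).IsHermitian := hS.1.sub hT.1
  set U := (h.eigenvectorUnitary : Matrix ι ι ℂ)
  have hU : Uᴴ * U = 1 := h.eigenvectorUnitary_conjTranspose_mul_self
  have hU' : U * Uᴴ = 1 := h.eigenvectorUnitary_mul_conjTranspose_self
  have hD : S - T = U * diagonal (fun i => (h.eigenvalues i : ℂ)) * Uᴴ :=
    h.eq_eigenvectorUnitary_mul
  generalize h.eigenvalues = d at hD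
  set sg : ι → ℝ := fun i => if 0 ≤ d i then 1 else -1 with hsg
  have hsg_mul : ∀ i, sg i * d i = |d i| := fun i => by
    simp only [hsg]
    split_ifs with h0
    · rw [one_mul, abs_of_nonneg h0]
    · rw [neg_one_mul, abs_of_neg (not_le.mp h0)]
  have hsg_sq : ∀ i, sg i * sg i = 1 := fun i => by
    simp only [hsg]
    split_ifs <;> norm_num
  set W := U * diagonal (fun i => (sg i : ℂ)) * Uᴴ with hWdef
  set P := U * diagonal (fun i => ((|d i| : ℝ) : ℂ)) * Uᴴ with hPdef
  have hWH : Wᴴ = W := by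
    simp [hWdef, conjTranspose_mul, Matrix.mul_assoc, diagonal_conjTranspose, Pi.star_def]
  have hWW : W * Wᴴ = 1 := by
    rw [hWH, hWdef, conj_diagonal_mul_conj_diagonal hU]
    simp only [← Complex.ofReal_mul, hsg_sq, Complex.ofReal_one, diagonal_one, Matrix.mul_one, hU']
  have hWD : W * (S - T) = P := by
    rw [hWdef, hD, conj_diagonal_mul_conj_diagonal hU]
    simp only [← Complex.ofReal_mul, hsg_mul, hPdef]
  have hDW : (S - T) * W = P := by
    rw [hWdef, hD, conj_diagonal_mul_conj_diagonal hU]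
    simp only [← Complex.ofReal_mul, mul_comm (d _), hsg_mul, hPdef]
  have hsub : (P - (S - T)).PosSemidef := by
    rw [hPdef, hD, ← Matrix.sub_mul, ← Matrix.mul_sub, diagonal_sub]
    simp only [← Complex.ofReal_sub]
    exact posSemidef_conj_diagonal U fun i => sub_nonneg.mpr (le_abs_self _)
  have hadd : (P + (S - T)).PosSemidef := by
    rw [hPdef, hD, ← Matrix.add_mul, ← Matrix.mul_add, diagonal_add]
    simp only [← Complex.ofReal_add]
    exact posSemidef_conj_diagonal U fun i => by linarith [neg_abs_le (d i)]
  refine le_trans ?_ (trace_mul_re_le_traceNorm hWW _)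
  have h2 : 2 * (W * (S * S - T * T)).trace = 2 * (P * (S + T)).trace := by
    have e : (2 : ℂ) • (W * (S * S - T * T)) =
        W * (S - T) * (S + T) + W * (S + T) * (S - T) := by
      rw [two_smul]
      noncomm_ring
    have e' : (W * (S + T) * (S - T)).trace = (P * (S + T)).trace := by
      rw [Matrix.trace_mul_comm, ← Matrix.mul_assoc, hDW]
    rw [← smul_eq_mul, ← Matrix.trace_smul, e, Matrix.trace_add, e', hWD, two_mul]
  have h3 : (W * (S * S - T * T)).trace = (P * (S + T)).trace := by simpa using h2
  rw [h3]
  have h4 : P * (S + T) =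
      (S - T) * (S - T) + ((P - (S - T)) * S + (P + (S - T)) * T) := by noncomm_ring
  rw [h4, Matrix.trace_add, Matrix.trace_add, Complex.add_re, Complex.add_re]
  linarith [hsub.trace_mul_re_nonneg hS, hadd.trace_mul_re_nonneg hT]

theorem sum_smul_mul_sum_smul {κ α β γ : Type*} [Fintype κ] [Fintype β]
    (A : κ → Matrix α β ℂ) (B : κ → Matrix β γ ℂ) (a b : κ → ℂ) :
    (∑ k, a k • A k) * (∑ k, b k • B k) = ∑ k, ∑ k', (a k * b k') • (A k * B k') := by
  rw [Matrix.sum_mul]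
  refine Finset.sum_congr rfl fun k _ => ?_
  rw [Matrix.mul_sum]
  simp only [Matrix.smul_mul, Matrix.mul_smul, smul_smul, mul_comm]

theorem sum_smul_mul_sum_smul_of_orthogonal {κ α β γ : Type*} [Fintype κ] [Fintype β]
    {A : κ → Matrix α β ℂ} {B : κ → Matrix β γ ℂ} (horth : ∀ k k', k ≠ k' → A k * B k' = 0)
    (a b : κ → ℂ) :
    (∑ k, a k • A k) * (∑ k, b k • B k) = ∑ k, (a k * b k) • (A k * B k) := by
  rw [sum_smul_mul_sum_smul]
  refine Finset.sum_congr rfl fun k _ => ?_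
  rw [Finset.sum_eq_single k (fun k' _ h => by rw [horth k k' h.symm, smul_zero])
    (fun h => absurd (Finset.mem_univ k) h)]

theorem conjTranspose_sum_smul_mul_sum_smul {κ β r : Type*} [Fintype κ] [Fintype β]
    {C : κ → Matrix β r ℂ} (horth : ∀ k k', k ≠ k' → (C k)ᴴ * C k' = 0) (a b : κ → ℂ) :
    (∑ k, a k • C k)ᴴ * (∑ k, b k • C k) = ∑ k, (star (a k) * b k) • ((C k)ᴴ * C k) := by
  simp only [conjTranspose_sum, conjTranspose_smul]
  exact sum_smul_mul_sum_smul_of_orthogonal horth _ _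

theorem posSemidef_one_sub_of_isHermitian_idempotent {β : Type*} [Fintype β] [DecidableEq β]
    {Q : Matrix β β ℂ} (hQ : Q.IsHermitian) (hQQ : Q * Q = Q) : (1 - Q).PosSemidef := by
  have h : 1 - Q = (1 - Q)ᴴ * (1 - Q) := by
    rw [conjTranspose_sub, conjTranspose_one, hQ.eq, Matrix.sub_mul, Matrix.mul_sub Q, hQQ]
    simp
  rw [h]
  exact posSemidef_conjTranspose_mul_self _

theorem posSemidef_one_sub_sum_mul_conjTranspose {κ β r : Type*} [Fintype κ] [Fintype β]
    [DecidableEq β] [Fintype r] {D : κ → Matrix β r ℂ}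
    (horth : ∀ k k', k ≠ k' → (D k)ᴴ * D k' = 0) (hD : ∀ k, D k * ((D k)ᴴ * D k) = D k) :
    (1 - ∑ k, D k * (D k)ᴴ).PosSemidef := by
  refine posSemidef_one_sub_of_isHermitian_idempotent ?_ ?_
  · simp [IsHermitian, conjTranspose_sum, conjTranspose_mul]
  · have e : ∀ k k', D k * (D k)ᴴ * (D k' * (D k')ᴴ) = D k * ((D k)ᴴ * D k') * (D k')ᴴ :=
      fun k k' => by simp only [Matrix.mul_assoc]
    have h := sum_smul_mul_sum_smul_of_orthogonal (A := fun k => D k * (D k)ᴴ)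
      (B := fun k => D k * (D k)ᴴ)
      (fun k k' h => by rw [e, horth k k' h, Matrix.mul_zero, Matrix.zero_mul])
      (fun _ => 1) (fun _ => 1)
    simpa only [one_smul, mul_one, e, hD] using h

theorem Matrix.PosSemidef.trace_conjTranspose_mul_mul_re_nonneg {β r : Type*} [Fintype β]
    [Fintype r] {A : Matrix β β ℂ} (hA : A.PosSemidef) (B : Matrix β r ℂ) :
    0 ≤ (Bᴴ * A * B).trace.re :=
  (Complex.le_def.mp (hA.conjTranspose_mul_mul_same B).trace_nonneg).1

/-- For blocks `C k` with orthogonal ranges and Gram square roots `S k`, a measurement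
distinguishing the phase-modulated sums `∑ k, (-1)^⟨k,u⟩ C k`. -/
theorem exists_povm_phase_discrimination {m : ℕ} {β r : Type*} [Fintype β] [DecidableEq β]
    [Fintype r] [DecidableEq r] {C : (Fin m → ZMod 2) → Matrix β r ℂ}
    {S J : (Fin m → ZMod 2) → Matrix r r ℂ}
    (horth : ∀ k k', k ≠ k' → (C k)ᴴ * C k' = 0) (hJ : ∀ k, (J k).IsHermitian)
    (hJG : ∀ k, J k * ((C k)ᴴ * C k) = S k)
    (hJJ : ∀ k, J k * (J k * ((C k)ᴴ * C k) * J k) = J k) :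
    ∃ Λ : (Fin m → ZMod 2) → Matrix β β ℂ, (∀ u, (Λ u).PosSemidef) ∧ ∑ u, Λ u = 1 ∧
      ∀ u, ((2 : ℝ) ^ m)⁻¹ * ((∑ k, S k)ᴴ * ∑ k, S k).trace.re ≤
        ((∑ k, bitSign k u • C k)ᴴ * Λ u * ∑ k, bitSign k u • C k).trace.re := by
  set D : (Fin m → ZMod 2) → Matrix β r ℂ := fun k => C k * J k with hD
  have hDH : ∀ k, (D k)ᴴ = J k * (C k)ᴴ := fun k => by
    rw [hD, conjTranspose_mul, (hJ k).eq]
  have hrest : (1 - ∑ k, D k * (D k)ᴴ).PosSemidef := by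
    refine posSemidef_one_sub_sum_mul_conjTranspose (fun k k' h => ?_) fun k => ?_
    · rw [hDH, Matrix.mul_assoc, hD, ← Matrix.mul_assoc (C k)ᴴ, horth k k' h, Matrix.zero_mul,
        Matrix.mul_zero]
    · rw [hDH]
      conv_rhs => rw [hD]; simp only []; rw [← hJJ k]
      simp only [hD, Matrix.mul_assoc]
  set T : (Fin m → ZMod 2) → Matrix r β ℂ := fun u => ∑ k, bitSign k u • (D k)ᴴ with hT
  have hTH : ∀ u, (T u)ᴴ = ∑ k, bitSign k u • D k := fun u => by
    simp [hT, conjTranspose_sum, conjTranspose_smul, star_bitSign]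
  have hsum : ∑ u, ((2 : ℝ) ^ m)⁻¹ • ((T u)ᴴ * T u) = ∑ k, D k * (D k)ᴴ := by
    simp only [hTH]
    simp only [hT, sum_smul_mul_sum_smul]
    rw [← Finset.smul_sum, Finset.sum_comm, Finset.smul_sum]
    refine Finset.sum_congr rfl fun k _ => ?_
    rw [Finset.sum_comm]
    simp only [← Finset.sum_smul, sum_bitSign_mul_bitSign, ite_smul, zero_smul,
      Finset.sum_ite_eq, Finset.mem_univ, if_true]
    rw [← Complex.coe_smul, smul_smul]
    simp
  have hTPhi : ∀ u, T u * ∑ k, bitSign k u • C k = ∑ k, S k := fun u => by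
    rw [hT, sum_smul_mul_sum_smul_of_orthogonal fun k k' h => by
      rw [hDH, Matrix.mul_assoc, horth k k' h, Matrix.mul_zero]]
    simp only [bitSign_mul_self, one_smul, hDH, Matrix.mul_assoc, hJG]
  have hpos : ∀ u, (((2 : ℝ) ^ m)⁻¹ • ((T u)ᴴ * T u)).PosSemidef := fun u =>
    (posSemidef_conjTranspose_mul_self (T u)).smul (by positivity)
  have hrest' : ∀ u : Fin m → ZMod 2, (if u = 0 then 1 - ∑ k, D k * (D k)ᴴ else 0).PosSemidef := fun u => by
    split_ifs
    · exact hrest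
    · exact PosSemidef.zero
  refine ⟨fun u => ((2 : ℝ) ^ m)⁻¹ • ((T u)ᴴ * T u) +
    if u = 0 then 1 - ∑ k, D k * (D k)ᴴ else 0, fun u => (hpos u).add (hrest' u), ?_, fun u => ?_⟩
  · rw [Finset.sum_add_distrib, hsum]
    simp
  · rw [Matrix.mul_add, Matrix.add_mul, Matrix.trace_add, Complex.add_re]
    have h0 := (hrest' u).trace_conjTranspose_mul_mul_re_nonneg (∑ k, bitSign k u • C k)
    have h1 : (∑ k, bitSign k u • C k)ᴴ * (((2 : ℝ) ^ m)⁻¹ • ((T u)ᴴ * T u)) *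
        (∑ k, bitSign k u • C k) = ((2 : ℝ) ^ m)⁻¹ • ((∑ k, S k)ᴴ * ∑ k, S k) := by
      rw [← hTPhi u, conjTranspose_mul, Matrix.mul_smul, Matrix.smul_mul]
      simp only [Matrix.mul_assoc]
    rw [h1, Matrix.trace_smul, Complex.smul_re, smul_eq_mul]
    linarith

theorem Matrix.PosSemidef.blockDiagonal {κ r : Type*} [Fintype κ] [DecidableEq κ] [Fintype r]
    [DecidableEq r] {A : κ → Matrix r r ℂ} (hA : ∀ k, (A k).PosSemidef) :
    (Matrix.blockDiagonal A).PosSemidef := by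
  choose S J hS hJ hSS _ _ using fun k => (hA k).exists_sqrt_pinv
  have h : Matrix.blockDiagonal A = (Matrix.blockDiagonal S)ᴴ * Matrix.blockDiagonal S := by
    rw [blockDiagonal_conjTranspose, ← blockDiagonal_mul]
    congr 1
    ext1 k
    rw [(hS k).1.eq, hSS]
  rw [h]
  exact posSemidef_conjTranspose_mul_self _

/-- The Powers–Størmer inequality for block-diagonal matrices. -/
theorem sum_trace_sub_mul_sub_le_traceNorm {κ r : Type*} [Fintype κ] [DecidableEq κ] [Fintype r]
    [DecidableEq r] {A B : κ → Matrix r r ℂ} (hA : ∀ k, (A k).PosSemidef)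
    (hB : ∀ k, (B k).PosSemidef) {M : Matrix (κ × r) (κ × r) ℂ}
    (hM : ∀ p q, M p q =
      if p.1 = q.1 then (A p.1 * A p.1 - B p.1 * B p.1) p.2 q.2 else 0) :
    ∑ k, ((A k - B k) * (A k - B k)).trace.re ≤ traceNorm M := by
  let e := Equiv.prodComm κ r
  have h := trace_sub_mul_sub_le_traceNorm ((PosSemidef.blockDiagonal hA).submatrix e)
    ((PosSemidef.blockDiagonal hB).submatrix e)
  have hMe : M = (blockDiagonal A).submatrix e e * (blockDiagonal A).submatrix e e -
      (blockDiagonal B).submatrix e e * (blockDiagonal B).submatrix e e := by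
    rw [submatrix_mul_equiv, submatrix_mul_equiv, ← blockDiagonal_mul, ← blockDiagonal_mul]
    ext p q
    have hpq : ((blockDiagonal fun k => A k * A k).submatrix e e -
        (blockDiagonal fun k => B k * B k).submatrix e e) p q =
        (if p.1 = q.1 then (A p.1 * A p.1) p.2 q.2 else 0) -
          (if p.1 = q.1 then (B p.1 * B p.1) p.2 q.2 else 0) := rfl
    rw [hM, hpq]
    split_ifs
    · rw [Matrix.sub_apply]
    · rw [sub_zero]
  rw [hMe]
  refine le_of_eq_of_le ?_ h
  have hD : (blockDiagonal A).submatrix e e - (blockDiagonal B).submatrix e e =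
      (blockDiagonal (A - B)).submatrix e e := by
    rw [blockDiagonal_sub]; rfl
  rw [hD, submatrix_mul_equiv, ← blockDiagonal_mul, ← Complex.re_sum]
  congr 1
  rw [← trace_blockDiagonal]
  exact (Equiv.sum_comp e _).symm

theorem one_sub_two_mul_le_trace_sum_mul_sum {κ r : Type*} [Fintype κ] [Nonempty κ] [Fintype r]
    {S : κ → Matrix r r ℂ} {T : Matrix r r ℂ} (hS : ∀ k, (S k).IsHermitian)
    (hT : T.IsHermitian) {ε : ℝ} (hStr : ∑ k, (S k * S k).trace.re = 1)
    (hTtr : (T * T).trace.re = (Fintype.card κ : ℝ)⁻¹)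
    (hclose : ∑ k, ((S k - T) * (S k - T)).trace.re ≤ 2 * ε) :
    1 - 2 * ε ≤ (Fintype.card κ : ℝ)⁻¹ * ((∑ k, S k)ᴴ * ∑ k, S k).trace.re := by
  set N := (Fintype.card κ : ℝ) with hN
  have hN0 : 0 < N := by rw [hN]; exact_mod_cast Fintype.card_pos
  have hXH : (∑ k, S k)ᴴ = ∑ k, S k := by
    rw [conjTranspose_sum]
    exact Finset.sum_congr rfl fun k _ => (hS k).eq
  have hexp : ∀ k, ((S k - T) * (S k - T)).trace.re =
      (S k * S k).trace.re + (T * T).trace.re - 2 * (S k * T).trace.re := fun k => by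
    simp only [Matrix.sub_mul, Matrix.mul_sub, Matrix.trace_sub, Complex.sub_re,
      Matrix.trace_mul_comm T (S k)]
    ring
  have hoverlap : ∑ k, ((S k - T) * (S k - T)).trace.re =
      2 - 2 * ((∑ k, S k) * T).trace.re := by
    simp only [hexp]
    rw [Finset.sum_sub_distrib, Finset.sum_add_distrib, hStr, hTtr, Finset.sum_const,
      Finset.card_univ, nsmul_eq_mul, ← Finset.mul_sum, Matrix.sum_mul, Matrix.trace_sum,
      Complex.re_sum, mul_inv_cancel₀ hN0.ne']
    ring
  set X := ∑ k, S k
  have hsq : 0 ≤ ((X - N • T) * (X - N • T)).trace.re := by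
    have h := (posSemidef_conjTranspose_mul_self (X - N • T)).trace_nonneg
    rw [conjTranspose_sub, hXH, conjTranspose_smul, hT.eq, star_trivial] at h
    exact (Complex.le_def.mp h).1
  have hexp' : ((X - N • T) * (X - N • T)).trace.re =
      (X * X).trace.re - 2 * N * (X * T).trace.re + N * (N * (T * T).trace.re) := by
    simp only [Matrix.sub_mul, Matrix.mul_sub, Matrix.trace_sub, Complex.sub_re,
      Matrix.smul_mul, Matrix.mul_smul, Matrix.trace_smul, Complex.smul_re, smul_eq_mul,
      Matrix.trace_mul_comm T X]
    ring
  rw [hexp', hTtr, mul_inv_cancel₀ hN0.ne'] at hsq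
  rw [hXH, inv_mul_eq_div, le_div_iff₀ hN0]
  nlinarith

theorem sum_conj_mul_mul_eq_trace {β r : Type*} [Fintype β] [Fintype r]
    (A : Matrix β r ℂ) (L : Matrix β β ℂ) :
    ∑ b, ∑ b', ∑ s, (starRingEnd ℂ) (A b s) * L b b' * A b' s = (Aᴴ * L * A).trace := by
  simp only [Matrix.trace, Matrix.diag_apply, Matrix.mul_apply, conjTranspose_apply,
    Complex.star_def, Finset.sum_mul]
  rw [Finset.sum_comm]
  conv_lhs => enter [2, b']; rw [Finset.sum_comm]
  rw [Finset.sum_comm]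

/-- For a state with H(X^A|B) = 0 (form ∑_x √q_x |x̃⟩_A|x̃⟩_{B₁}|ϑ_x⟩_{B₂R}),
if the hashed X-key from a surjective linear extractor g to ℓ bits is ε-secure against R,
then every surjective linear f⊥ to n−ℓ bits with ker f⊥ = range gᵀ is a compressor from
which, together with B = B₁B₂, the Z-outcome is √(2ε)-recoverable. -/
theorem pa_implies_csi_caseA {n ℓ : ℕ} (hn : 1 ≤ n) (hℓ : ℓ ≤ n)
    {β₂ r : Type*} [Fintype β₂] [DecidableEq β₂] [Fintype r] [DecidableEq r]
    (q : (Fin n → ZMod 2) → ℝ) (hq0 : ∀ x, 0 ≤ q x) (hq1 : ∑ x, q x = 1)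
    (ϑ : (Fin n → ZMod 2) → β₂ × r → ℂ) (hϑ : ∀ x, ∑ t, ‖ϑ x t‖ ^ 2 = 1)
    (ψ : (Fin n → ZMod 2) × ((Fin n → ZMod 2) × β₂) × r → ℂ)
    (hform : ∀ a b₁ b₂ s, ψ (a, (b₁, b₂), s)
        = ∑ x, (Real.sqrt (q x) : ℂ) * xVecV n x a * xVecV n x b₁ * ϑ x (b₂, s))
    (g : ((Fin n → ZMod 2)) →ₗ[ZMod 2] (Fin ℓ → ZMod 2)) (hg : Function.Surjective g)
    (ε : ℝ) (hε0 : 0 ≤ ε) (hε1 : ε ≤ 1)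
    (hsec : traceDist (keyState ψ g) (idealKeyV ℓ ψ) ≤ ε) :
    ∀ fp : ((Fin n → ZMod 2)) →ₗ[ZMod 2] (Fin (n - ℓ) → ZMod 2),
      Function.Surjective fp → LinearMap.ker fp = LinearMap.range (adjLin g) →
      ∃ Λ : (Fin (n - ℓ) → ZMod 2) → (Fin n → ZMod 2) →
          Matrix ((Fin n → ZMod 2) × β₂) ((Fin n → ZMod 2) × β₂) ℂ,
        (∀ c z, (Λ c z).PosSemidef) ∧ (∀ c, ∑ z, Λ c z = 1) ∧
        1 - Real.sqrt (2 * ε) ≤ (∑ z, ∑ b, ∑ b', ∑ s,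
          (starRingEnd ℂ) (ψ (z, b, s)) * Λ (fp z) z b b' * ψ (z, b', s)).re := by
  intro fp hfp hker
  set c : (Fin n → ZMod 2) → Matrix ((Fin n → ZMod 2) × β₂) r ℂ := fun x =>
    Matrix.of fun b s => (√(q x) : ℂ) * xVecV n x b.1 * ϑ x (b.2, s) with hc
  have hψ : ∀ z b s, ψ (z, b, s) = (∑ x, xVecV n x z • c x) b s := by
    rintro z ⟨b₁, b₂⟩ s
    rw [hform, Matrix.sum_apply]
    refine Finset.sum_congr rfl fun x _ => ?_
    simp only [hc, Matrix.smul_apply, Matrix.of_apply, smul_eq_mul]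
    ring
  have horth : ∀ x y, x ≠ y → (c x)ᴴ * c y = 0 := fun x y hxy => by
    ext s s'
    simp only [hc, Matrix.mul_apply, conjTranspose_apply, Matrix.of_apply, star_mul', star_xVecV,
      Fintype.sum_prod_type, Matrix.zero_apply]
    rw [Finset.sum_comm]
    refine Finset.sum_eq_zero fun b₂ _ => ?_
    calc _ = ∑ b₁, (xVecV n x b₁ * xVecV n y b₁) *
          (star (√(q x) : ℂ) * star (ϑ x (b₂, s)) * ((√(q y) : ℂ) * ϑ y (b₂, s'))) :=
          Finset.sum_congr rfl fun _ _ => by ring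
      _ = 0 := by rw [← Finset.sum_mul, sum_xVecV_mul_xVecV, if_neg hxy, zero_mul]
  have htr : ∀ x, ((c x)ᴴ * c x).trace = q x := fun x => by
    simp only [Matrix.trace, Matrix.diag_apply, hc, Matrix.mul_apply, conjTranspose_apply,
      Matrix.of_apply, star_mul', star_xVecV, Fintype.sum_prod_type]
    calc _ = ∑ s, ∑ b₁, ∑ b₂, (xVecV n x b₁ * xVecV n x b₁) *
          ((q x : ℂ) * ((‖ϑ x (b₂, s)‖ ^ 2 : ℝ) : ℂ)) := by
          refine Finset.sum_congr rfl fun s _ => Finset.sum_congr rfl fun b₁ _ =>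
            Finset.sum_congr rfl fun b₂ _ => ?_
          have h1 : (√(q x) : ℂ) * (√(q x) : ℂ) = q x := by
            rw [← Complex.ofReal_mul, Real.mul_self_sqrt (hq0 x)]
          have h2 : star (ϑ x (b₂, s)) * ϑ x (b₂, s) = ((‖ϑ x (b₂, s)‖ ^ 2 : ℝ) : ℂ) := by
            rw [Complex.star_def, ← Complex.normSq_eq_conj_mul_self, Complex.normSq_eq_norm_sq]
          rw [← h1, ← h2, Complex.star_def, Complex.conj_ofReal]
          ring
      _ = (∑ b₁, xVecV n x b₁ * xVecV n x b₁) *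
          ((q x : ℂ) * ((∑ t, ‖ϑ x t‖ ^ 2 : ℝ) : ℂ)) := by
          rw [Fintype.sum_prod_type_right, Complex.ofReal_sum, Finset.mul_sum, Finset.mul_sum]
          refine Finset.sum_congr rfl fun s _ => ?_
          rw [Complex.ofReal_sum, Finset.mul_sum, Finset.sum_mul]
          exact Finset.sum_congr rfl fun b₁ _ => by rw [Finset.mul_sum]
      _ = q x := by rw [sum_xVecV_mul_xVecV, if_pos rfl, hϑ]; simp
  have hcond : ∀ x b s, condVecXV ψ x (b, s) = c x b s := fun x b s => by
    simp only [condVecXV, hψ, Matrix.sum_apply, Matrix.smul_apply, smul_eq_mul, Finset.mul_sum,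
      ← Complex.star_def, star_xVecV, ← mul_assoc]
    rw [Finset.sum_comm]
    simp only [← Finset.sum_mul, sum_xVecV_mul_xVecV]
    simp
  have hθ : ∀ x, thetaRV ψ x = ((c x)ᴴ * c x)ᵀ := fun x => by
    ext s s'
    simp only [thetaRV, Matrix.of_apply, hcond, transpose_apply, Matrix.mul_apply,
      conjTranspose_apply]
    exact Finset.sum_congr rfl fun b _ => mul_comm _ _
  have hred : reducedR ψ = (∑ x, (c x)ᴴ * c x)ᵀ := by
    have h : reducedR ψ = (∑ z, (∑ x, xVecV n x z • c x)ᴴ * ∑ x, xVecV n x z • c x)ᵀ := by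
      ext s s'
      simp only [reducedR, Matrix.of_apply, hψ, transpose_apply, Matrix.sum_apply s' s]
      refine Finset.sum_congr rfl fun z _ => ?_
      rw [Matrix.mul_apply]
      exact Finset.sum_congr rfl fun b _ => mul_comm _ _
    rw [h]
    simp only [conjTranspose_sum_smul_mul_sum_smul horth, star_xVecV]
    rw [Finset.sum_comm]
    simp only [← Finset.sum_smul, sum_xVecV_mul_xVecV, if_true, one_smul]
  set G : (Fin ℓ → ZMod 2) → Matrix r r ℂ := fun k =>
    ∑ x, (if g x = k then (1 : ℝ) else 0) • ((c x)ᴴ * c x) with hG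
  have hGpos : ∀ k, (G k).PosSemidef := fun k =>
    posSemidef_sum _ fun x _ => (posSemidef_conjTranspose_mul_self (c x)).smul
      (by split_ifs <;> norm_num)
  have hGsum : ∑ k, G k = ∑ x, (c x)ᴴ * c x := by
    simp only [hG]
    rw [Finset.sum_comm]
    simp
  have hGtr : (∑ x, (c x)ᴴ * c x).trace = 1 := by
    rw [Matrix.trace_sum]
    simp only [htr]
    exact_mod_cast hq1
  choose S J hS hJ hSS hJG hJJ using fun k => (hGpos k).exists_sqrt_pinv
  obtain ⟨T, -, hT, -, hTT, -, -⟩ := PosSemidef.exists_sqrt_pinv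
    ((posSemidef_sum univ fun x _ => posSemidef_conjTranspose_mul_self (c x)).smul
      (show (0 : ℝ) ≤ (2 ^ ℓ)⁻¹ by positivity))
  have hclose : ∑ k, ((S k - T) * (S k - T)).trace.re ≤ 2 * ε := by
    have h := sum_trace_sub_mul_sub_le_traceNorm (fun k => (hS k).transpose)
      (fun _ : Fin ℓ → ZMod 2 => hT.transpose) (M := keyState ψ g - idealKeyV ℓ ψ) (fun p q => by
        simp only [← transpose_mul, hSS, hTT, Matrix.sub_apply, keyState, idealKeyV, of_apply,
          hθ, hred, hG]
        split_ifs with hpq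
        · simp only [Finset.sum_filter, Matrix.sum_apply, transpose_apply, Matrix.smul_apply,
            Complex.real_smul]
          push_cast
          refine congrArg₂ (· - ·) (Finset.sum_congr rfl fun x _ => ?_) rfl
          split_ifs <;> simp
        · simp)
    have h' : ∀ k, (((S k)ᵀ - Tᵀ) * ((S k)ᵀ - Tᵀ)).trace = ((S k - T) * (S k - T)).trace :=
      fun k => by rw [← transpose_sub, ← transpose_mul, Matrix.trace_transpose]
    simp only [h'] at h
    rw [traceDist] at hsec
    linarith
  have hX : 1 - 2 * ε ≤ ((2 : ℝ) ^ ℓ)⁻¹ * ((∑ k, S k)ᴴ * ∑ k, S k).trace.re := by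
    have hcard : (Fintype.card (Fin ℓ → ZMod 2) : ℝ) = 2 ^ ℓ := by simp
    rw [← hcard]
    refine one_sub_two_mul_le_trace_sum_mul_sum (fun k => (hS k).1) hT.1 ?_ ?_ hclose
    · simp only [hSS]
      rw [← Complex.re_sum, ← Matrix.trace_sum, hGsum, hGtr, Complex.one_re]
    · rw [hTT, Matrix.trace_smul, hGtr, hcard, Complex.smul_re, Complex.one_re, smul_eq_mul, mul_one]
  set Φ : (Fin n → ZMod 2) → Matrix ((Fin n → ZMod 2) × β₂) r ℂ := fun z =>
    ∑ x, bitSign x z • c x with hΦ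
  have key : ∀ c', ∃ Λ : (Fin ℓ → ZMod 2) →
      Matrix ((Fin n → ZMod 2) × β₂) ((Fin n → ZMod 2) × β₂) ℂ,
      (∀ u, (Λ u).PosSemidef) ∧ ∑ u, Λ u = 1 ∧
      ∀ u, 1 - 2 * ε ≤ ((Φ (Function.surjInv hfp c' + adjLin g u))ᴴ * Λ u *
        Φ (Function.surjInv hfp c' + adjLin g u)).trace.re := by
    intro c'
    set w := Function.surjInv hfp c'
    set C : (Fin ℓ → ZMod 2) → Matrix _ r ℂ := fun k =>
      ∑ x, (if g x = k then bitSign x w else 0) • c x with hC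
    have hCC : ∀ k, (C k)ᴴ * C k = G k := fun k => by
      simp only [hC, hG, conjTranspose_sum_smul_mul_sum_smul horth]
      refine Finset.sum_congr rfl fun x _ => ?_
      split_ifs <;> simp [star_bitSign, bitSign_mul_self]
    obtain ⟨Λ, h1, h2, h3⟩ := exists_povm_phase_discrimination (C := C) (S := S) (J := J)
      (fun k k' h => by
        simp only [hC, conjTranspose_sum_smul_mul_sum_smul horth]
        refine Finset.sum_eq_zero fun x _ => ?_
        split_ifs with ha hb
        · exact absurd (ha.symm.trans hb) h
        all_goals simp)
      hJ (fun k => by rw [hCC, hJG]) (fun k => by rw [hCC, hJJ])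
    refine ⟨Λ, h1, h2, fun u => (hX.trans (h3 u)).trans_eq ?_⟩
    have hCΦ : ∑ k, bitSign k u • C k = Φ (w + adjLin g u) := by
      simp only [hC, hΦ, Finset.smul_sum, smul_smul]
      rw [Finset.sum_comm]
      refine Finset.sum_congr rfl fun x _ => ?_
      rw [← Finset.sum_smul]
      simp [bitSign_add_right, bitSign_adjLin, mul_comm]
    rw [hCΦ]
  choose M hMpos hMsum hMle using key
  set Λ : (Fin (n - ℓ) → ZMod 2) → (Fin n → ZMod 2) →
      Matrix ((Fin n → ZMod 2) × β₂) ((Fin n → ZMod 2) × β₂) ℂ := fun c' z =>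
    ∑ u, if Function.surjInv hfp c' + adjLin g u = z then M c' u else 0 with hΛ
  have hterm : ∀ c' z u, (if Function.surjInv hfp c' + adjLin g u = z then M c' u
      else 0).PosSemidef := fun c' z u => by
    split_ifs
    · exact hMpos c' u
    · exact PosSemidef.zero
  have hΛpos : ∀ c' z, (Λ c' z).PosSemidef := fun c' z => posSemidef_sum _ fun u _ => hterm c' z u
  refine ⟨Λ, hΛpos, fun c' => ?_, ?_⟩
  · simp only [hΛ]
    rw [Finset.sum_comm]
    simp [hMsum]
  have hsuccess : (∑ z, ∑ b, ∑ b', ∑ s,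
      (starRingEnd ℂ) (ψ (z, b, s)) * Λ (fp z) z b b' * ψ (z, b', s)).re =
      ∑ z, ((2 : ℝ) ^ n)⁻¹ * ((Φ z)ᴴ * Λ (fp z) z * Φ z).trace.re := by
    rw [Complex.re_sum]
    refine Finset.sum_congr rfl fun z _ => ?_
    have hΨ : ∑ x, xVecV n x z • c x = ((√(2 ^ n) : ℝ) : ℂ)⁻¹ • Φ z := by
      simp only [hΦ, Finset.smul_sum, smul_smul, xVecV_eq]
    simp only [hψ, hΨ]
    rw [sum_conj_mul_mul_eq_trace, conjTranspose_smul, Matrix.smul_mul, Matrix.smul_mul,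
      Matrix.mul_smul, smul_smul, Matrix.trace_smul, ← Complex.ofReal_inv, Complex.star_def,
      Complex.conj_ofReal, Complex.ofReal_inv, sqrt_two_pow_inv_mul_self, smul_eq_mul]
    have hpow : ((2 : ℂ) ^ n)⁻¹ = ((((2 : ℝ) ^ n)⁻¹ : ℝ) : ℂ) := by push_cast; rfl
    rw [hpow, Complex.re_ofReal_mul]
  rw [hsuccess]
  have hbound : ∀ z, max 0 (1 - 2 * ε) ≤ ((Φ z)ᴴ * Λ (fp z) z * Φ z).trace.re := fun z => by
    refine max_le ((hΛpos _ _).trace_conjTranspose_mul_mul_re_nonneg _) ?_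
    have hmem : z - Function.surjInv hfp (fp z) ∈ LinearMap.ker fp := by
      rw [LinearMap.mem_ker, map_sub, Function.surjInv_eq hfp, sub_self]
    rw [hker] at hmem
    obtain ⟨u, hu⟩ := hmem
    have hz : Function.surjInv hfp (fp z) + adjLin g u = z := by rw [hu]; abel
    have h := hMle (fp z) u
    rw [hz] at h
    refine h.trans ?_
    simp only [hΛ, Matrix.mul_sum, Matrix.sum_mul, Matrix.trace_sum, Complex.re_sum]
    refine le_trans (le_of_eq ?_) (Finset.single_le_sum (fun u' _ =>
      (hterm (fp z) z u').trace_conjTranspose_mul_mul_re_nonneg (Φ z)) (Finset.mem_univ u))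
    rw [if_pos hz]
  have hfinal : max 0 (1 - 2 * ε) ≤
      ∑ z, ((2 : ℝ) ^ n)⁻¹ * ((Φ z)ᴴ * Λ (fp z) z * Φ z).trace.re := by
    rw [← Finset.mul_sum]
    have h := Finset.card_nsmul_le_sum univ _ _ fun z _ => hbound z
    rw [nsmul_eq_mul] at h
    have hcard : ((univ : Finset (Fin n → ZMod 2)).card : ℝ) = 2 ^ n := by simp
    rw [hcard] at h
    rw [inv_mul_eq_div, le_div_iff₀ (by positivity)]
    linarith
  refine le_trans ?_ hfinal
  rcases le_total (2 * ε) 1 with h | h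
  · refine le_max_of_le_right (sub_le_sub_left ?_ 1)
    exact Real.le_sqrt_of_sq_le (by nlinarith)
  · refine le_max_of_le_left (sub_nonpos.mpr ?_)
    exact Real.one_le_sqrt.mpr h
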